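/- arXiv:2209.03783 — 8 statements merged into one kernel-verified Lean document; each statement's English description precedes it below -/
import Mathlib

section
/- Let (Λ̃,⟨,⟩) be an even unimodular nondegenerate lattice, n ≥ 2 an integer, v ∈ Λ̃ a primitive element with v² = 2n−2, and let L = {x ∈ Λ̃ : ⟨x,v⟩ = 0}. Let ε ∈ {1,−1} and let g be an isometry of L such that for every y ∈ L ⊗ ℚ satisfying ⟨y,x⟩ ∈ ℤ for all x ∈ L, one has (g ⊗ ℚ)(y) − ε·y ∈ L (i.e. g acts as ε·id on the discriminant group L^∨/L). Then there exists a unique isometry g̃ of Λ̃ with g̃(x) = g(x) for all x ∈ L and g̃(v) = ε·v. -/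
open TensorProduct

/-!
Write `d = ⟨v, v⟩`. The integral map `p x = d x - ⟨x, v⟩ v` takes values in `L = v^⊥`, and
`d x = p x + ⟨x, v⟩ v`, so a linear map on `Λ̃` is determined by its values on `L` and at `v`.
Since `⟨p x, l⟩ = d ⟨x, l⟩` for `l ∈ L`, the vector `p x / d` lies in `L^∨`; as `g` acts by `ε` on
`L^∨ / L`, the map `(g - ε) ∘ p` is divisible by `d`, say equal to `d h` with `h : Λ̃ → L`, and
`ε + h` is the required extension. The inverse of `g` also acts by `ε`, and its extension inverts
that of `g`.
-/

theorem exists_linearMap_smul_eq {R M N : Type*} [CommSemiring R] [AddCommMonoid M] [Module R M]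
    [AddCommMonoid N] [Module R N] {d : R} (hd : IsSMulRegular N d) (f : M →ₗ[R] N)
    (hf : ∀ x, ∃ y, f x = d • y) : ∃ h : M →ₗ[R] N, f = d • h := by
  have hinj : Function.Injective (LinearMap.lsmul R N d) := hd
  have hmem (x : M) : f x ∈ LinearMap.range (LinearMap.lsmul R N d) :=
    (hf x).imp fun _ hy => hy.symm
  let e := LinearEquiv.ofInjective (LinearMap.lsmul R N d) hinj
  refine ⟨e.symm.toLinearMap ∘ₗ f.codRestrict _ hmem, LinearMap.ext fun x => ?_⟩
  exact congrArg Subtype.val (e.apply_symm_apply (f.codRestrict _ hmem x)).symm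

section Discriminant

variable {R M : Type*} [CommRing R] [AddCommGroup M] [Module R M]

/-- The vector `y` lies in the dual lattice `M^∨ ⊆ M ⊗ K` of the lattice `(M, b)`. -/
def IsDualVector {K : Type*} [CommRing K] [Algebra R K] (b : LinearMap.BilinForm R M)
    (y : K ⊗[R] M) : Prop :=
  ∀ x : M, ∃ k : R, b.baseChange K y ((1 : K) ⊗ₜ[R] x) = algebraMap R K k

/-- The endomorphism `g` acts as multiplication by `ε` on the discriminant group `M^∨ / M` of the
lattice `(M, b)`, for `K` the fraction ring of `R`. -/
def ActsOnDiscriminantAs (K : Type*) [CommRing K] [Algebra R K] (b : LinearMap.BilinForm R M)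
    (ε : R) (g : M →ₗ[R] M) : Prop :=
  ∀ y : K ⊗[R] M, IsDualVector b y →
    ∃ z : M, g.baseChange K y - algebraMap R K ε • y = (1 : K) ⊗ₜ[R] z

/-- The endomorphism `g` acts as multiplication by `ε` on the `d`-torsion of the discriminant group
of the lattice `(M, b)`. The classes killed by `d` are those of `m / d` with `d ∣ b m x` for all
`x`; clearing denominators avoids the fraction field. -/
def ActsOnDiscriminantTorsionAs (b : LinearMap.BilinForm R M) (d ε : R) (g : M →ₗ[R] M) : Prop :=
  ∀ m : M, (∀ x, d ∣ b m x) → ∃ z : M, g m - ε • m = d • z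

theorem one_tmul_injective (K : Type*) [CommRing K] [Algebra R K] [IsFractionRing R K]
    [Module.IsTorsionFree R M] : Function.Injective fun m : M => (1 : K) ⊗ₜ[R] m := by
  intro m m' h
  obtain ⟨c, hc⟩ := (IsLocalizedModule.eq_iff_exists (nonZeroDivisors R)
    (TensorProduct.mk R K M 1)).mp h
  exact (isRegular_iff_mem_nonZeroDivisors.mpr c.2).isSMulRegular hc

variable {b : LinearMap.BilinForm R M} {d ε : R}

theorem ActsOnDiscriminantAs.actsOnDiscriminantTorsionAs {K : Type*} [CommRing K] [Algebra R K]
    [IsFractionRing R K] [Module.IsTorsionFree R M] {g : M →ₗ[R] M}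
    (hg : ActsOnDiscriminantAs K b ε g) (hd : IsRegular d) :
    ActsOnDiscriminantTorsionAs b d ε g := by
  intro m hm
  obtain ⟨c, hc⟩ : ∃ c : K, algebraMap R K d * c = 1 :=
    (IsLocalization.map_units K
      (⟨d, isRegular_iff_mem_nonZeroDivisors.mp hd⟩ : nonZeroDivisors R)).exists_right_inv
  have hdual : IsDualVector b (c ⊗ₜ[R] m) := fun x => by
    obtain ⟨k, hk⟩ := hm x
    refine ⟨k, ?_⟩
    rw [LinearMap.BilinForm.baseChange_tmul, hk, mul_one, Algebra.smul_def, map_mul]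
    linear_combination algebraMap R K k * hc
  obtain ⟨z, hz⟩ := hg _ hdual
  have hdc (w : M) : d • (c ⊗ₜ[R] w) = (1 : K) ⊗ₜ[R] w := by
    rw [TensorProduct.smul_tmul', Algebra.smul_def, hc]
  refine ⟨z, one_tmul_injective (R := R) K ?_⟩
  calc (1 : K) ⊗ₜ[R] (g m - ε • m)
      = d • (g.baseChange K (c ⊗ₜ[R] m) - algebraMap R K ε • c ⊗ₜ[R] m) := by
        rw [LinearMap.baseChange_tmul, algebraMap_smul, smul_sub, smul_comm d ε, hdc, hdc,
          TensorProduct.tmul_sub, TensorProduct.tmul_smul]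
    _ = (1 : K) ⊗ₜ[R] (d • z) := by rw [hz, TensorProduct.tmul_smul]

theorem ActsOnDiscriminantTorsionAs.symm {g : M ≃ₗ[R] M}
    (hg : ActsOnDiscriminantTorsionAs b d ε g) (hisom : ∀ x y, b (g x) (g y) = b x y)
    (hε : ε * ε = 1) : ActsOnDiscriminantTorsionAs b d ε g.symm := by
  intro m hm
  have hdvd (x : M) : d ∣ b (g.symm m) x := by
    simpa [← hisom (g.symm m) x] using hm (g x)
  obtain ⟨z, hz⟩ := hg (g.symm m) hdvd
  replace hz : m - ε • g.symm m = d • z := by simpa using hz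
  refine ⟨-ε • z, ?_⟩
  calc g.symm m - ε • m = -ε • (m - ε • g.symm m) := by
        linear_combination (norm := module) (-hε) • g.symm m
    _ = d • -ε • z := by rw [hz, smul_comm]

end Discriminant

section Perp

variable {R Λ : Type*} [CommRing R] [AddCommGroup Λ] [Module R Λ]

/-- The orthogonal complement `v^⊥` of a vector `v`. -/
abbrev perp (B : LinearMap.BilinForm R Λ) (v : Λ) : Submodule R Λ :=
  LinearMap.ker (B.flip v)

variable (B : LinearMap.BilinForm R Λ) (v : Λ)

/-- The orthogonal projection onto `v^⊥`, multiplied by `B v v` in order to be defined over `R`. -/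
def scaledPerpProj : Λ →ₗ[R] perp B v :=
  (B v v • LinearMap.id - (B.flip v).smulRight v).codRestrict (perp B v) fun x => by
    simp [mul_comm]

theorem coe_scaledPerpProj (x : Λ) : (scaledPerpProj B v x : Λ) = B v v • x - B x v • v := rfl

variable {B v}

theorem apply_right_eq_zero_of_perp (l : perp B v) : B l v = 0 := l.2

theorem apply_left_eq_zero_of_perp (hB : B.IsSymm) (l : perp B v) : B v l = 0 :=
  (hB.eq v l).trans l.2

theorem scaledPerpProj_self : scaledPerpProj B v v = 0 :=
  Subtype.ext (by simp [coe_scaledPerpProj])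

theorem scaledPerpProj_perp (l : perp B v) : scaledPerpProj B v l = B v v • l :=
  Subtype.ext (by simp [coe_scaledPerpProj, apply_right_eq_zero_of_perp l])

theorem apply_scaledPerpProj_perp (hB : B.IsSymm) (x : Λ) (l : perp B v) :
    B (scaledPerpProj B v x) l = B v v * B x l := by
  simp [coe_scaledPerpProj, apply_left_eq_zero_of_perp hB l]

theorem linearMap_ext_perp {N : Type*} [AddCommGroup N] [Module R N]
    (hd : IsSMulRegular N (B v v)) {f g : Λ →ₗ[R] N} (hperp : ∀ l : perp B v, f l = g l)
    (hv : f v = g v) : f = g := by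
  ext x
  apply hd
  have hx : B v v • x = scaledPerpProj B v x + B x v • v := by simp [coe_scaledPerpProj]
  change B v v • f x = B v v • g x
  rw [← map_smul, ← map_smul, hx, map_add, map_add, map_smul, map_smul, hperp, hv]

theorem preserves_form_of_perp (hB : B.IsSymm) (hd : IsRegular (B v v)) {G : Λ →ₗ[R] Λ}
    (hperp : ∀ l l' : perp B v, B (G l) (G l') = B l l')
    (horth : ∀ l : perp B v, B (G l) (G v) = 0) (hv : B (G v) (G v) = B v v) (x y : Λ) :
    B (G x) (G y) = B x y := by
  have hleft (l : perp B v) : B (G l) ∘ₗ G = B l :=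
    linearMap_ext_perp hd.left.isSMulRegular (hperp l)
      ((horth l).trans (apply_right_eq_zero_of_perp l).symm)
  have hself : B (G v) ∘ₗ G = B v :=
    linearMap_ext_perp hd.left.isSMulRegular
      (fun l => by
        rw [LinearMap.comp_apply, hB.eq, horth, apply_left_eq_zero_of_perp hB])
      hv
  have hcomp : B.comp G G = B :=
    linearMap_ext_perp hd.isSMulRegular hleft hself
  exact LinearMap.congr_fun₂ hcomp x y

theorem exists_linearMap_extending_perp [Module.IsTorsionFree R Λ] (hB : B.IsSymm)
    (hd : IsRegular (B v v)) {ε : R} {g : perp B v →ₗ[R] perp B v}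
    (hg : ActsOnDiscriminantTorsionAs (B.domRestrict₁₂ (perp B v) (perp B v)) (B v v) ε g) :
    ∃ G : Λ →ₗ[R] Λ, (∀ l : perp B v, G l = g l) ∧ G v = ε • v := by
  have hreg : IsSMulRegular (perp B v) (B v v) := hd.isSMulRegular
  obtain ⟨h, hh⟩ := exists_linearMap_smul_eq hreg ((g - ε • LinearMap.id) ∘ₗ scaledPerpProj B v)
    fun x => hg _ fun l => ⟨B x l, apply_scaledPerpProj_perp hB x l⟩
  have hh_apply (x : Λ) :
      B v v • h x = g (scaledPerpProj B v x) - ε • scaledPerpProj B v x :=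
    (LinearMap.congr_fun hh x).symm
  have hh_perp (l : perp B v) : h l = g l - ε • l := hreg <| by
    simp only [hh_apply, scaledPerpProj_perp, map_smul, smul_sub, smul_comm ε]
  have hh_self : h v = 0 := hreg <| by
    simp only [hh_apply, scaledPerpProj_self, map_zero, smul_zero, sub_zero]
  refine ⟨ε • LinearMap.id + (perp B v).subtype ∘ₗ h, fun l => ?_, ?_⟩
  · simp [hh_perp]
  · simp [hh_self]

theorem bijective_of_extends_perp [Module.IsTorsionFree R Λ] (hd : IsRegular (B v v)) {ε : R}
    (hε : ε * ε = 1) {g : perp B v ≃ₗ[R] perp B v} {G G' : Λ →ₗ[R] Λ}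
    (hG : ∀ l : perp B v, G l = g l) (hGv : G v = ε • v)
    (hG' : ∀ l : perp B v, G' l = g.symm l) (hGv' : G' v = ε • v) :
    Function.Bijective G := by
  have hleft : G' ∘ₗ G = LinearMap.id := linearMap_ext_perp hd.isSMulRegular
    (fun l => by simp [hG, hG']) (by simp [hGv, hGv', smul_smul, hε])
  have hright : G ∘ₗ G' = LinearMap.id := linearMap_ext_perp hd.isSMulRegular
    (fun l => by simp [hG, hG']) (by simp [hGv, hGv', smul_smul, hε])
  exact Function.bijective_iff_has_inverse.mpr
    ⟨G', LinearMap.congr_fun hleft, LinearMap.congr_fun hright⟩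

end Perp

theorem extension_of_isometry_to_mukai_lattice_general
    {R Λ : Type*} [CommRing R] [AddCommGroup Λ] [Module R Λ] [Module.IsTorsionFree R Λ]
    {B : LinearMap.BilinForm R Λ} (hB : B.IsSymm) {v : Λ} (hd : IsRegular (B v v))
    {ε : R} (hε : ε * ε = 1) (g : perp B v ≃ₗ[R] perp B v)
    (hisom : ∀ x y : perp B v, B (g x : Λ) (g y : Λ) = B (x : Λ) (y : Λ))
    (hdisc : ActsOnDiscriminantTorsionAs
      (B.domRestrict₁₂ (perp B v) (perp B v)) (B v v) ε g.toLinearMap) :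
    ∃! G : Λ →ₗ[R] Λ, Function.Bijective G ∧ (∀ x y : Λ, B (G x) (G y) = B x y) ∧
      (∀ x : perp B v, G x = g x) ∧ G v = ε • v := by
  obtain ⟨G, hG, hGv⟩ := exists_linearMap_extending_perp hB hd hdisc
  obtain ⟨G', hG', hGv'⟩ := exists_linearMap_extending_perp hB hd (hdisc.symm hisom hε)
  refine ⟨G, ⟨bijective_of_extends_perp hd hε hG hGv hG' hGv', ?_, hG, hGv⟩, ?_⟩
  · apply preserves_form_of_perp hB hd
    · simpa [hG] using hisom
    · exact fun l => by simp [hG, hGv, apply_right_eq_zero_of_perp (g l)]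
    · simp [hGv, ← mul_assoc, hε]
  · rintro F ⟨-, -, hF, hFv⟩
    exact linearMap_ext_perp hd.isSMulRegular (fun l => (hF l).trans (hG l).symm)
      (hFv.trans hGv.symm)

/-- **Extension lemma.** Let `Λ̃` be an even unimodular nondegenerate lattice, `n ≥ 2`,
`v ∈ Λ̃` primitive with `v² = 2n − 2`, and `L = v^⊥`. If `g` is an isometry of `L`
acting as `ε·Id` on the discriminant group `L^∨/L` (with `ε = ±1`), then `g` extends
uniquely to an isometry `g̃` of `Λ̃` with `g̃(v) = ε·v`. -/
theorem extension_of_isometry_to_mukai_lattice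
    {Λ : Type*} [AddCommGroup Λ] [Module.Free ℤ Λ] [Module.Finite ℤ Λ]
    (B : LinearMap.BilinForm ℤ Λ)
    (hSymm : ∀ x y : Λ, B x y = B y x)
    (hEven : ∀ x : Λ, 2 ∣ B x x)
    (hNondeg : ∀ x : Λ, (∀ y : Λ, B x y = 0) → x = 0)
    (hUnimod : Function.Bijective fun x : Λ => (B x : Λ →ₗ[ℤ] ℤ))
    (n : ℕ) (hn : 2 ≤ n)
    (v : Λ) (hv2 : B v v = 2 * (n : ℤ) - 2)
    (hvprim : ∀ (k : ℤ) (y : Λ), v = k • y → k = 1 ∨ k = -1)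
    (L : Submodule ℤ Λ) (hL : ∀ x : Λ, x ∈ L ↔ B x v = 0)
    (ε : ℤ) (hε : ε = 1 ∨ ε = -1)
    (g : L →ₗ[ℤ] L) (hgbij : Function.Bijective g)
    (hgisom : ∀ x y : L, B (g x : Λ) (g y : Λ) = B (x : Λ) (y : Λ))
    (hdisc : ∀ y : ℚ ⊗[ℤ] L,
      (∀ x : L, ∃ k : ℤ,
        (LinearMap.BilinForm.baseChange ℚ (B.domRestrict₁₂ L L)) y ((1 : ℚ) ⊗ₜ[ℤ] x) = (k : ℚ)) →
      ∃ z : L, (LinearMap.baseChange ℚ g) y - (ε : ℚ) • y = (1 : ℚ) ⊗ₜ[ℤ] z) :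
    ∃! gt : Λ →ₗ[ℤ] Λ, Function.Bijective gt ∧
      (∀ x y : Λ, B (gt x) (gt y) = B x y) ∧
      (∀ x : L, gt (x : Λ) = ((g x : L) : Λ)) ∧
      gt v = ε • v := by
  obtain rfl : L = perp B v := Submodule.ext hL
  have hd : IsRegular (B v v) := IsRegular.of_ne_zero (by omega)
  exact extension_of_isometry_to_mukai_lattice_general ⟨hSymm⟩ hd (mul_self_eq_one_iff.mpr hε)
    (LinearEquiv.ofBijective g hgbij) hgisom
    (ActsOnDiscriminantAs.actsOnDiscriminantTorsionAs (K := ℚ) hdisc hd)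
end

section
/- Let (L,B) be an even lattice and e ∈ L a nonzero element with e² = 0 whose divisibility div(e) equals m > 0. Then there exists f ∈ L with f² = 0 and B(e,f) = m²; in particular e and f span a rank-2 sublattice of L with Gram matrix ((0, m²),(m², 0)), i.e. a copy of the twisted hyperbolic plane U(m²). -/
/-!
Choose `y` with `B(e,y) = m`. For every `k`, the vector `f = m y - k e` satisfies `B(e,f) = m²` and
`f² = m² (y² - 2k)`, because `e` is isotropic. Evenness allows `k = y² / 2`, which makes `f`
isotropic; the Gram determinant of `e, f` is then `-m⁴ ≠ 0`.
-/

open scoped nonZeroDivisors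

section

variable {R M : Type*} [CommRing R] [AddCommGroup M] [Module R M]

theorem linearIndependent_of_det_dual_apply_mem_nonZeroDivisors {ι : Type*} [Fintype ι]
    [DecidableEq ι] {v : ι → M} (φ : ι → Module.Dual R M)
    (hdet : (Matrix.of fun i j ↦ φ i (v j)).det ∈ R⁰) : LinearIndependent R v :=
  .of_comp (LinearMap.pi φ)
    (Matrix.nonsingular_iff_det_mem_nonZeroDivisors.mpr hdet).linearIndependent_col

variable {B : LinearMap.BilinForm R M} {e f y : M}

theorem linearIndependent_pair_of_isotropic (he : B e e = 0) (hf : B f f = 0)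
    (hef : B e f ∈ R⁰) (hfe : B f e ∈ R⁰) : LinearIndependent R ![e, f] := by
  refine linearIndependent_of_det_dual_apply_mem_nonZeroDivisors (fun i ↦ B (![e, f] i)) ?_
  have hdet : (Matrix.of fun i j ↦ B (![e, f] i) (![e, f] j)).det = -1 * (B e f * B f e) := by
    simp [Matrix.det_fin_two, he, hf]
  exact hdet ▸ mul_mem isUnit_one.neg.mem_nonZeroDivisors (mul_mem hef hfe)

theorem apply_self_smul_sub_smul_of_isotropic (hB : B.IsSymm) (he : B e e = 0) (a k : R) :
    B (a • y - k • e) (a • y - k • e) = a ^ 2 * B y y - 2 * a * k * B e y := by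
  simp only [map_sub, map_smul, LinearMap.sub_apply, LinearMap.smul_apply, smul_eq_mul, he,
    hB.eq y e]
  ring

theorem exists_isotropic_apply_eq_sq (hB : B.IsSymm) (he : B e e = 0) (hy : 2 ∣ B y y) :
    ∃ f : M, B f f = 0 ∧ B e f = B e y ^ 2 := by
  obtain ⟨k, hk⟩ := hy
  refine ⟨B e y • y - k • e, ?_, ?_⟩
  · rw [apply_self_smul_sub_smul_of_isotropic hB he, hk]
    ring
  · simp [he, sq]

theorem isotropic_class_gives_twisted_hyperbolic_plane_general (hB : B.IsSymm) (he : B e e = 0)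
    (hey : B e y ∈ R⁰) (hy : 2 ∣ B y y) :
    ∃ f : M, B f f = 0 ∧ B e f = B e y ^ 2 ∧ B f e = B e y ^ 2 ∧
      LinearIndependent R ![e, f] := by
  obtain ⟨f, hf, hef⟩ := exists_isotropic_apply_eq_sq hB he hy
  have hfe : B f e = B e y ^ 2 := by rw [hB.eq, hef]
  have hsq : B e y ^ 2 ∈ R⁰ := pow_mem hey 2
  exact ⟨f, hf, hef, hfe, linearIndependent_pair_of_isotropic he hf (hef ▸ hsq) (hfe ▸ hsq)⟩

end

/-- Let `(L,B)` be an even lattice and `e ∈ L` a nonzero isotropic element of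
divisibility `m > 0`. Then there is `f ∈ L` with `f² = 0` and `B(e,f) = m²`, so that
`e` and `f` span a copy of the twisted hyperbolic plane `U(m²)`. -/
theorem isotropic_class_gives_twisted_hyperbolic_plane
    {L : Type*} [AddCommGroup L] [Module.Free ℤ L] [Module.Finite ℤ L]
    (B : LinearMap.BilinForm ℤ L)
    (hSymm : ∀ x y : L, B x y = B y x)
    (hEven : ∀ x : L, 2 ∣ B x x)
    (e : L) (hene : e ≠ 0) (hiso : B e e = 0)
    (m : ℤ) (hm : 0 < m)
    (hdvd : ∀ y : L, m ∣ B e y) (hgen : ∃ y : L, B e y = m) :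
    ∃ f : L, B f f = 0 ∧ B e f = m ^ 2 ∧ B f e = m ^ 2 ∧
      LinearIndependent ℤ ![e, f] := by
  obtain ⟨y, rfl⟩ := hgen
  exact isotropic_class_gives_twisted_hyperbolic_plane_general ⟨hSymm⟩ hiso
    (mem_nonZeroDivisors_of_ne_zero hm.ne') (hEven y)
end

section
/- Let (N,B) be an even nondegenerate lattice, D ∈ N a primitive element, and let r ≥ 1 and c be integers. Assume that for every nonzero L ∈ N, the product r·div(L) divides 2c·B(D,L). Then r divides c·D². -/
/-!
Let `d = div(D)`. If `d` is even, the condition at `L = D` says that `r * d` divides `2 * c * D²`,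
and the factor `2` of `d` cancels. If `d` is odd, then `2 * d` divides `D²`, both `2` and `d` doing
so; choosing `y` with `B(D, y) = d`, the condition at `L = y` says that `r` divides `2 * c * d`,
hence `c * D²`. In place of `2`, any prime of a Bézout domain will do.
-/

/-- `m` is a divisibility of `x` with respect to `B`: it generates the ideal of all values `B x y`.
This is encoded as `m` being a common divisor of these values and one of them. A relation is used
because, in a domain, such an `m` is only unique up to a unit. -/
structure IsDivisibility {R M : Type*} [CommRing R] [AddCommMonoid M] [Module R M]
    (B : LinearMap.BilinForm R M) (x : M) (m : R) : Prop where
  dvd_apply : ∀ y, m ∣ B x y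
  exists_apply_eq : ∃ y, B x y = m

namespace IsDivisibility

theorem zero {R M : Type*} [CommRing R] [AddCommMonoid M] [Module R M]
    (B : LinearMap.BilinForm R M) : IsDivisibility B 0 0 where
  dvd_apply y := by simp
  exists_apply_eq := ⟨0, by simp⟩

theorem exists_nonneg {M : Type*} [AddCommGroup M] (B : LinearMap.BilinForm ℤ M) (x : M) :
    ∃ m : ℤ, 0 ≤ m ∧ IsDivisibility B x m := by
  let values : Ideal ℤ := LinearMap.range (B x)
  let g : ℤ := Submodule.IsPrincipal.generator values
  have g_dvd (y : M) : g ∣ B x y :=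
    (Submodule.IsPrincipal.mem_iff_generator_dvd values).mp ⟨y, rfl⟩
  have abs_g_mem : |g| ∈ values :=
    abs_mem_iff.mpr (Submodule.IsPrincipal.generator_mem values)
  exact ⟨|g|, abs_nonneg g, fun y ↦ (abs_dvd g _).mpr (g_dvd y), abs_g_mem⟩

end IsDivisibility

theorem condition_star_implies_r_divides_cDsq_general
    {R M : Type*} [CommRing R] [IsDomain R] [IsBezout R] [AddCommMonoid M] [Module R M]
    (B : LinearMap.BilinForm R M) {p : R} (hp : Prime p) (D : M) (hD : p ∣ B D D) (r c : R)
    (hstar : ∀ L : M, L ≠ 0 → ∃ m, IsDivisibility B L m ∧ r * m ∣ p * c * B D L) :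
    r ∣ c * B D D := by
  have star (L : M) : ∃ m, IsDivisibility B L m ∧ r * m ∣ p * c * B D L := by
    rcases eq_or_ne L 0 with rfl | hL
    · exact ⟨0, .zero B, by simp⟩
    · exact hstar L hL
  obtain ⟨d, hd, star_D⟩ := star D
  by_cases hpd : p ∣ d
  · have : p * r ∣ p * (c * B D D) := by
      rw [mul_comm p r, ← mul_assoc]
      exact (mul_dvd_mul_left r hpd).trans star_D
    exact (mul_dvd_mul_iff_left hp.ne_zero).mp this
  · obtain ⟨y, hy⟩ := hd.exists_apply_eq
    obtain ⟨m, -, star_y⟩ := star y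
    have hpd_coprime : IsCoprime p d := hp.irreducible.coprime_iff_not_dvd.mpr hpd
    calc
      r ∣ p * c * B D y := dvd_of_mul_right_dvd star_y
      _ = c * (p * d) := by rw [hy]; ring
      _ ∣ c * B D D := mul_dvd_mul_left c (hpd_coprime.mul_dvd hD (hd.dvd_apply D))

/-- Let `(N,B)` be an even nondegenerate lattice, `D ∈ N` primitive, `r ≥ 1` and `c`
integers. If for every nonzero `L ∈ N` the product `r·div(L)` divides `2c·B(D,L)`
(the paper's condition (∗)), then `r` divides `c·D²`. Here `div(L)` is the nonnegative
generator of the ideal `{B(L,y) : y ∈ N}`. -/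
theorem condition_star_implies_r_divides_cDsq
    {N : Type*} [AddCommGroup N] [Module.Free ℤ N] [Module.Finite ℤ N]
    (B : LinearMap.BilinForm ℤ N)
    (hSymm : ∀ x y : N, B x y = B y x)
    (hEven : ∀ x : N, 2 ∣ B x x)
    (hNondeg : ∀ x : N, (∀ y : N, B x y = 0) → x = 0)
    (D : N) (hDprim : ∀ (k : ℤ) (y : N), D = k • y → k = 1 ∨ k = -1)
    (r c : ℤ) (hr : 1 ≤ r)
    (hstar : ∀ (L : N), L ≠ 0 → ∀ m : ℤ, 0 ≤ m →
      (∀ y : N, m ∣ B L y) → (∃ y : N, B L y = m) →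
      (r * m) ∣ 2 * c * B D L) :
    r ∣ c * B D D := by
  refine condition_star_implies_r_divides_cDsq_general B Int.prime_two D (hEven D) r c fun L hL ↦ ?_
  obtain ⟨m, hm_nonneg, hm⟩ := IsDivisibility.exists_nonneg B L
  exact ⟨m, hm, hstar L hL m hm_nonneg hm.dvd_apply hm.exists_apply_eq⟩
end

section
/- Let (Λ,B) be an even unimodular nondegenerate lattice, N ⊆ Λ a primitive sublattice on which B is nondegenerate, and D ∈ N a primitive element. Let r ≥ 1, c, s be integers with gcd(r,c,s) = 1, and in the Mukai lattice Λ̃ = ℤ ⊕ Λ ⊕ ℤ set v = (r, cD, s); assume v² = c²·D² − 2rs ≥ 2. Then the following are equivalent: (i) r divides c²·D², the element e = (r, cD, c²D²/r − s) of Λ̃ is primitive, and for every w ∈ Λ̃ with ⟨w,v⟩ = 0 the integer v²/2 divides ⟨w,e⟩; (ii) for every nonzero L ∈ N the product r·div_N(L) divides 2c·B(D,L), and gcd(r,s) ∈ {1,2}. -/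
/-- The Mukai pairing on `ℤ ⊕ Λ ⊕ ℤ`: `⟨(a,x,b),(a',x',b')⟩ = B(x,x') − ab' − a'b`. -/
def mukaiPair {Λ : Type*} [AddCommGroup Λ] (B : LinearMap.BilinForm ℤ Λ)
    (w w' : ℤ × Λ × ℤ) : ℤ :=
  B w.2.1 w'.2.1 - w.1 * w'.2.2 - w'.1 * w.2.2

/-!
Both conditions are equivalent to `r ∣ 2c`.

For (i): since `e - v = (0, 0, c²D²/r - 2s)` and `v² = r (c²D²/r - 2s)`, divisibility of `⟨w, e⟩`
by `v²/2` for `w ⊥ v` says exactly that `r` divides twice the first entry of `w`. If `B(y, D) = 1`,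
the vector `(c, sy, 0)` is orthogonal to `v`, whence `r ∣ 2c`; conversely, if `r ∣ 2c` and
`w = (a, x, b) ⊥ v`, then `r` divides each of `2ar`, `2ac`, `2as`, hence `2a`.

For (ii): nondegeneracy of `N` yields `L ∈ N` and `k ≠ 0` with `B(L, ·) = k B(y, ·)` on `N`, so `L`
has divisibility `|k| = |B(D, L)|` in `N`, and testing (∗) on it gives `r ∣ 2c`.
-/

section Module

variable {R M : Type*} [CommRing R] [AddCommGroup M] [Module R M]

variable (R) in
/-- Primitive vectors of a module: those that are multiples of another vector only by units.
Over `ℤ` this is the usual notion for lattices. -/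
def IsPrimitiveVector (x : M) : Prop :=
  ∀ (k : R) (y : M), x = k • y → IsUnit k

theorem exists_eq_smul_of_forall_dual_dvd [Module.Free R M] {g : R} {x : M}
    (hg : ∀ f : Module.Dual R M, g ∣ f x) : ∃ y, x = g • y := by
  let b := Module.Free.chooseBasis R M
  choose z hz using fun i => hg (b.coord i)
  refine ⟨∑ i ∈ (b.repr x).support, z i • b i, ?_⟩
  calc x = ∑ i ∈ (b.repr x).support, b.repr x i • b i := (b.linearCombination_repr x).symm
    _ = ∑ i ∈ (b.repr x).support, g • z i • b i :=
      Finset.sum_congr rfl fun i _ => by rw [← mul_smul, ← hz i, b.coord_apply]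
    _ = g • ∑ i ∈ (b.repr x).support, z i • b i := Finset.smul_sum.symm

theorem IsPrimitiveVector.exists_dual_eq_one [IsPrincipalIdealRing R] [Module.Free R M] {x : M}
    (hx : IsPrimitiveVector R x) : ∃ f : Module.Dual R M, f x = 1 := by
  obtain ⟨g, hg⟩ := IsPrincipalIdealRing.principal (Module.Dual.eval R M x).range
  have g_dvd (f : Module.Dual R M) : g ∣ f x :=
    Ideal.mem_span_singleton.1 (hg.le (LinearMap.mem_range_self _ f))
  obtain ⟨y, hy⟩ := exists_eq_smul_of_forall_dual_dvd g_dvd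
  have range_eq_top : (Module.Dual.eval R M x).range = ⊤ :=
    hg.trans (Ideal.span_singleton_eq_top.2 (hx g y hy))
  exact LinearMap.range_eq_top.1 range_eq_top 1

theorem IsPrimitiveVector.exists_bilin_eq_one [IsPrincipalIdealRing R] [Module.Free R M]
    {B : LinearMap.BilinForm R M} (hB : Function.Surjective B) {x : M}
    (hx : IsPrimitiveVector R x) : ∃ y, B y x = 1 := by
  obtain ⟨f, hf⟩ := hx.exists_dual_eq_one
  obtain ⟨y, rfl⟩ := hB f
  exact ⟨y, hf⟩

theorem exists_smul_mem_range_of_finrank_eq [IsDomain R] {M' : Type*} [AddCommGroup M']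
    [Module R M'] [Module.Finite R M'] {φ : M →ₗ[R] M'} (hφ : Function.Injective φ)
    (hrank : Module.finrank R M = Module.finrank R M') (x : M') :
    ∃ k : R, k ≠ 0 ∧ k • x ∈ φ.range := by
  have finrank_quotient : Module.finrank R (M' ⧸ φ.range) = 0 := by
    have := φ.range.finrank_quotient_add_finrank
    rw [LinearMap.finrank_range_of_inj hφ] at this
    lia
  obtain ⟨k, hk⟩ := (Module.finrank_eq_zero_iff_isTorsion.1 finrank_quotient)
    (x := Submodule.Quotient.mk x)
  exact ⟨k, nonZeroDivisors.coe_ne_zero k, (Submodule.Quotient.mk_eq_zero _).1 hk⟩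

theorem exists_smul_eq_of_separatingLeft [IsDomain R] [Module.Free R M] [Module.Finite R M]
    {B : LinearMap.BilinForm R M} (hB : B.SeparatingLeft) (f : Module.Dual R M) :
    ∃ k : R, k ≠ 0 ∧ ∃ x, B x = k • f :=
  exists_smul_mem_range_of_finrank_eq
    (LinearMap.ker_eq_bot.1 (LinearMap.separatingLeft_iff_ker_eq_bot.1 hB))
    (Module.finrank_linearMap_self R R M).symm f

end Module

section Arithmetic

variable {r c s : ℤ}

theorem dvd_of_dvd_mul_of_gcd_eq_one (hgcd : Int.gcd (Int.gcd r c : ℤ) s = 1) {m k : ℤ}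
    (hr : m ∣ k * r) (hc : m ∣ k * c) (hs : m ∣ k * s) : m ∣ k := by
  have dvd_mul_gcd {a b : ℤ} (ha : m ∣ k * a) (hb : m ∣ k * b) : m ∣ k * Int.gcd a b := by
    rw [Int.gcd_eq_gcd_ab, mul_add, ← mul_assoc, ← mul_assoc]
    exact dvd_add (ha.mul_right _) (hb.mul_right _)
  simpa [hgcd] using dvd_mul_gcd (dvd_mul_gcd hr hc) hs

theorem gcd_eq_one_or_two_of_dvd_two_mul (hgcd : Int.gcd (Int.gcd r c : ℤ) s = 1)
    (hrc : r ∣ 2 * c) : Int.gcd r s = 1 ∨ Int.gcd r s = 2 := by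
  have gcd_dvd_two : (Int.gcd r s : ℤ) ∣ 2 :=
    dvd_of_dvd_mul_of_gcd_eq_one hgcd ((Int.gcd_dvd_left r s).mul_left 2)
      ((Int.gcd_dvd_left r s).trans hrc) ((Int.gcd_dvd_right r s).mul_left 2)
  exact (Nat.dvd_prime Nat.prime_two).1 (Int.natCast_dvd_natCast.1 gcd_dvd_two)

theorem mul_dvd_sq_mul_of_dvd_two_mul (hrc : r ∣ 2 * c) {n : ℤ} (hn : 2 ∣ n) :
    r * c ∣ c ^ 2 * n := by
  obtain ⟨d, rfl⟩ := hn
  rw [show c ^ 2 * (2 * d) = 2 * c * c * d by ring]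
  exact (mul_dvd_mul_right hrc c).mul_right d

end Arithmetic

section Mukai

variable {Λ : Type*} [AddCommGroup Λ] {B : LinearMap.BilinForm ℤ Λ} {N : Submodule ℤ Λ}
  {D x y : Λ} {r c s t : ℤ}

theorem mukaiPair_self_eq_mul (ht : B x x = r * t) :
    mukaiPair B (r, x, s) (r, x, s) = r * (t - 2 * s) := by
  simp only [mukaiPair, ht]
  ring

theorem mukaiPair_eq_neg_mul_of_orthogonal {w : ℤ × Λ × ℤ} (hw : mukaiPair B w (r, x, s) = 0) :
    mukaiPair B w (r, x, t - s) = -(w.1 * (t - 2 * s)) := by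
  simp only [mukaiPair] at hw ⊢
  linear_combination hw

theorem half_mukaiPair_self_dvd_iff (ht : B x x = r * t) (hx : 2 ∣ B x x)
    (hv : mukaiPair B (r, x, s) (r, x, s) ≠ 0) {w : ℤ × Λ × ℤ}
    (hw : mukaiPair B w (r, x, s) = 0) :
    mukaiPair B (r, x, s) (r, x, s) / 2 ∣ mukaiPair B w (r, x, t - s) ↔ r ∣ 2 * w.1 := by
  have two_dvd : 2 ∣ r * (t - 2 * s) := by
    rw [mul_sub, ← ht]
    exact dvd_sub hx ⟨r * s, by ring⟩
  rw [mukaiPair_self_eq_mul ht] at hv ⊢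
  rw [mukaiPair_eq_neg_mul_of_orthogonal hw, dvd_neg,
    Int.ediv_dvd_iff_dvd_mul two_dvd two_ne_zero, ← mul_assoc,
    mul_dvd_mul_iff_right (right_ne_zero_of_mul hv)]

theorem forall_orthogonal_dvd_two_mul_fst_iff (hy : B y D = 1)
    (hgcd : Int.gcd (Int.gcd r c : ℤ) s = 1) :
    (∀ w, mukaiPair B w (r, c • D, s) = 0 → r ∣ 2 * w.1) ↔ r ∣ 2 * c := by
  refine ⟨fun h => h (c, s • y, 0) ?_, fun hrc w hw => ?_⟩
  · simp [mukaiPair, hy]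
  · have fst_mul_s : w.1 * s = c * B w.2.1 D - r * w.2.2 := by
      simp only [mukaiPair, map_smul, smul_eq_mul] at hw
      linear_combination -hw
    refine dvd_of_dvd_mul_of_gcd_eq_one hgcd (dvd_mul_left r _) ?_ ?_
    · rw [mul_right_comm]
      exact hrc.mul_right _
    · rw [mul_assoc, fst_mul_s, mul_sub, ← mul_assoc, mul_left_comm]
      exact dvd_sub (hrc.mul_right _) (dvd_mul_right _ _)

theorem isPrimitiveVector_of_gcd_eq_one (hy : B y D = 1)
    (hgcd : Int.gcd (Int.gcd r c : ℤ) s = 1) (hct : c ∣ t) :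
    IsPrimitiveVector ℤ (r, c • D, t - s) := by
  rintro k ⟨a, x, b⟩ h
  simp only [Prod.smul_mk, Prod.mk.injEq, smul_eq_mul] at h
  obtain ⟨hr, hcD, hts⟩ := h
  have k_dvd_c : k ∣ c := ⟨B y x, by simpa [hy] using congrArg (B y) hcD⟩
  have k_dvd_s : k ∣ s := (dvd_sub_right (k_dvd_c.trans hct)).1 ⟨b, hts⟩
  refine isUnit_of_dvd_one (dvd_of_dvd_mul_of_gcd_eq_one hgcd ?_ ?_ ?_)
  · exact (Dvd.intro a hr.symm).mul_left 1
  · exact k_dvd_c.mul_left 1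
  · exact k_dvd_s.mul_left 1

/-- Markman's numerical criterion, condition (i), for the Mukai vector `v = (r, cD, s)`. The integer
division in `e = (r, cD, c²D²/r - s)` is exact because of the first conjunct. -/
def MarkmanCriterion (B : LinearMap.BilinForm ℤ Λ) (D : Λ) (r c s : ℤ) : Prop :=
  r ∣ c ^ 2 * B D D ∧
    IsPrimitiveVector ℤ (r, c • D, c ^ 2 * B D D / r - s) ∧
    ∀ w : ℤ × Λ × ℤ, mukaiPair B w (r, c • D, s) = 0 →
      mukaiPair B (r, c • D, s) (r, c • D, s) / 2 ∣
        mukaiPair B w (r, c • D, c ^ 2 * B D D / r - s)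

/-- The paper's condition (∗): `r * div_N(L)` divides `2c * B(D, L)` for all nonzero `L ∈ N`.
The divisibility `m = div_N(L)` is encoded as a nonnegative value of `B L` on `N` dividing all of
its values on `N`. -/
def ConditionStar (B : LinearMap.BilinForm ℤ Λ) (N : Submodule ℤ Λ) (D : Λ) (r c : ℤ) : Prop :=
  ∀ L ∈ N, L ≠ 0 → ∀ m : ℤ, 0 ≤ m → (∀ y ∈ N, m ∣ B L y) → (∃ y ∈ N, B L y = m) →
    r * m ∣ 2 * c * B D L

theorem markmanCriterion_iff_dvd_two_mul (hD : 2 ∣ B D D) (hy : B y D = 1)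
    (hgcd : Int.gcd (Int.gcd r c : ℤ) s = 1)
    (hv : mukaiPair B (r, c • D, s) (r, c • D, s) ≠ 0) :
    MarkmanCriterion B D r c s ↔ r ∣ 2 * c := by
  have self_smul : B (c • D) (c • D) = c ^ 2 * B D D := by
    simp only [map_smul, LinearMap.smul_apply, smul_eq_mul]
    ring
  have two_dvd : 2 ∣ B (c • D) (c • D) := self_smul ▸ hD.mul_left _
  have orthogonal_iff {t : ℤ} (ht : c ^ 2 * B D D = r * t) :
      (∀ w, mukaiPair B w (r, c • D, s) = 0 → mukaiPair B (r, c • D, s) (r, c • D, s) / 2 ∣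
        mukaiPair B w (r, c • D, t - s)) ↔ r ∣ 2 * c := by
    rw [← forall_orthogonal_dvd_two_mul_fst_iff hy hgcd]
    exact forall₂_congr fun w hw => half_mukaiPair_self_dvd_iff (self_smul.trans ht) two_dvd hv hw
  have quotient_eq {t : ℤ} (ht : c ^ 2 * B D D = r * t) : c ^ 2 * B D D / r = t := by
    rw [mukaiPair_self_eq_mul (self_smul.trans ht)] at hv
    rw [ht, Int.mul_ediv_cancel_left _ (left_ne_zero_of_mul hv)]
  refine ⟨fun ⟨⟨t, ht⟩, _, hdvd⟩ => ?_, fun hrc => ?_⟩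
  · rw [quotient_eq ht] at hdvd
    exact (orthogonal_iff ht).1 hdvd
  · obtain ⟨u, hu⟩ := mul_dvd_sq_mul_of_dvd_two_mul hrc hD
    rw [mul_assoc] at hu
    rw [MarkmanCriterion, quotient_eq hu]
    exact ⟨⟨_, hu⟩, isPrimitiveVector_of_gcd_eq_one hy hgcd (dvd_mul_right c u),
      (orthogonal_iff hu).2 hrc⟩

theorem conditionStar_iff_dvd_two_mul [Module.Free ℤ N] [Module.Finite ℤ N] (hB : B.IsSymm)
    (hN : (B.restrict N).SeparatingLeft) (hDN : D ∈ N) (hy : B y D = 1) :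
    ConditionStar B N D r c ↔ r ∣ 2 * c := by
  refine ⟨fun h => ?_, fun hrc L _ _ m _ hm _ => ?_⟩
  · obtain ⟨k, hk, L, hL⟩ := exists_smul_eq_of_separatingLeft hN ((B y).domRestrict N)
    have pair_eq (z : Λ) (hz : z ∈ N) : B L z = k * B y z := LinearMap.congr_fun hL ⟨z, hz⟩
    have pair_D : B L D = k := by rw [pair_eq D hDN, hy, mul_one]
    have L_ne_zero : (L : Λ) ≠ 0 := fun hL0 => hk (by rw [← pair_D, hL0]; simp)
    have abs_dvd_pair (z : Λ) (hz : z ∈ N) : |k| ∣ B L z := by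
      rw [abs_dvd, pair_eq z hz]
      exact dvd_mul_right _ _
    have abs_attained : ∃ z ∈ N, B L z = |k| := by
      rcases abs_choice k with habs | habs
      · exact ⟨D, hDN, by rw [pair_D, habs]⟩
      · exact ⟨-D, N.neg_mem hDN, by rw [map_neg, pair_D, habs]⟩
    have star_L : r * |k| ∣ 2 * c * k := by
      simpa only [hB.eq D L, pair_D] using
        h L L.2 L_ne_zero |k| (abs_nonneg k) abs_dvd_pair abs_attained
    exact Int.dvd_of_mul_dvd_mul_right hk ((mul_dvd_mul_left r (self_dvd_abs k)).trans star_L)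
  · rw [hB.eq D L]
    exact mul_dvd_mul hrc (hm D hDN)

theorem reflection_monodromy_criterion_iff_condition_star_general
    [Module.Free ℤ N] [Module.Finite ℤ N] (hB : B.IsSymm)
    (hN : (B.restrict N).SeparatingLeft) (hDN : D ∈ N) (hD : 2 ∣ B D D) (hDdiv : ∃ y, B y D = 1)
    (hgcd : Int.gcd (Int.gcd r c : ℤ) s = 1)
    (hv : mukaiPair B (r, c • D, s) (r, c • D, s) ≠ 0) :
    MarkmanCriterion B D r c s ↔
      ConditionStar B N D r c ∧ (Int.gcd r s = 1 ∨ Int.gcd r s = 2) := by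
  obtain ⟨y, hy⟩ := hDdiv
  rw [markmanCriterion_iff_dvd_two_mul hD hy hgcd hv, conditionStar_iff_dvd_two_mul hB hN hDN hy]
  exact (and_iff_left_of_imp (gcd_eq_one_or_two_of_dvd_two_mul hgcd)).symm

end Mukai

/-- Markman's numerical criterion for the reflection `R_e` to be a monodromy operator
acting as `−Id` on the discriminant group, rephrased: condition (i) (integrality and
primitivity of `e = (r, cD, c²D²/r − s)` together with `(v²/2) ∣ ⟨w,e⟩` for all
`w ⊥ v`) is equivalent to the paper's condition (∗) together with `gcd(r,s) ∈ {1,2}`. -/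
theorem reflection_monodromy_criterion_iff_condition_star
    {Λ : Type*} [AddCommGroup Λ] [Module.Free ℤ Λ] [Module.Finite ℤ Λ]
    (B : LinearMap.BilinForm ℤ Λ)
    (hSymm : ∀ x y : Λ, B x y = B y x)
    (hEven : ∀ x : Λ, 2 ∣ B x x)
    (hNondeg : ∀ x : Λ, (∀ y : Λ, B x y = 0) → x = 0)
    (hUnimod : Function.Bijective fun x : Λ => (B x : Λ →ₗ[ℤ] ℤ))
    (N : Submodule ℤ Λ)
    (hNprim : ∀ (k : ℤ) (x : Λ), k ≠ 0 → k • x ∈ N → x ∈ N)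
    (hNnondeg : ∀ x ∈ N, (∀ y ∈ N, B x y = 0) → x = 0)
    (D : Λ) (hDN : D ∈ N)
    (hDprim : ∀ (k : ℤ) (y : Λ), D = k • y → k = 1 ∨ k = -1)
    (r c s : ℤ) (hr : 1 ≤ r)
    (hgcd : Int.gcd (Int.gcd r c : ℤ) s = 1)
    (hv2 : 2 ≤ mukaiPair B (r, c • D, s) (r, c • D, s)) :
    (r ∣ c ^ 2 * B D D ∧
      (∀ (k : ℤ) (w : ℤ × Λ × ℤ), (r, c • D, c ^ 2 * B D D / r - s) = k • w →
        k = 1 ∨ k = -1) ∧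
      (∀ w : ℤ × Λ × ℤ, mukaiPair B w (r, c • D, s) = 0 →
        (mukaiPair B (r, c • D, s) (r, c • D, s) / 2) ∣
          mukaiPair B w (r, c • D, c ^ 2 * B D D / r - s)))
    ↔
    ((∀ L ∈ N, L ≠ 0 → ∀ m : ℤ, 0 ≤ m →
        (∀ y ∈ N, m ∣ B L y) → (∃ y ∈ N, B L y = m) →
        (r * m) ∣ 2 * c * B D L) ∧
      (Int.gcd r s = 1 ∨ Int.gcd r s = 2)) := by
  have hD : IsPrimitiveVector ℤ D := fun k y h => Int.isUnit_iff.2 (hDprim k y h)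
  have hN : (B.restrict N).SeparatingLeft := fun x hx =>
    Subtype.ext (hNnondeg x x.2 fun y hy => hx ⟨y, hy⟩)
  simpa only [MarkmanCriterion, ConditionStar, IsPrimitiveVector, Int.isUnit_iff] using
    reflection_monodromy_criterion_iff_condition_star_general ⟨hSymm⟩ hN hDN (hEven D)
      (hD.exists_bilin_eq_one hUnimod.surjective) hgcd (by lia)
end

section
/- Fix an integer d ≥ 1 and equip ℤ³ with the Mukai pairing ⟨(r₁,c₁,s₁),(r₂,c₂,s₂)⟩ = 2d·c₁c₂ − r₁s₂ − r₂s₁. Let r ≥ 1, c, s be integers with gcd(r,c,s) = 1, set v = (r,c,s), and assume v² = 2dc² − 2rs ≥ 2, r | 2c and gcd(r,s) ∈ {1,2}. Then there exists w ∈ H_v with either (w² = 0 and ⟨w,v⟩ ∈ {1,2}) or (w² = −2 and ⟨w,v⟩ = 0) if and only if at least one of the following holds: (a) r = 1 or r = 2; (b) there exist k ∈ ℤ and m ∈ {1,2} with c = kr and s = dk²r − m; (c) d is even and there exist an integer a ≥ 2 and an odd integer m with r = 2a, c = ma and s = (d/2)m²a − 1; (d) d is odd and there exist an odd integer a ≥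 3 and an odd integer m with r = 2a, c = ma and 2s = dm²a − 1. -/
/-- The Mukai pairing on `ℤ³` for a K3 surface of degree `2d`:
`⟨(r₁,c₁,s₁),(r₂,c₂,s₂)⟩ = 2d·c₁c₂ − r₁s₂ − r₂s₁`. -/
def mk3 (d : ℤ) (v w : ℤ × ℤ × ℤ) : ℤ :=
  2 * d * v.2.1 * w.2.1 - v.1 * w.2.2 - w.1 * v.2.2

/-!
Let `g = gcd(r, c)`, `r = ρg` and `c = γg`. The classes of `H_v` are the `w = (ρl, γl, z)`, and in
the coordinates `l` and `δ = dγ²l - ρz` the Mukai pairing is hyperbolic: `⟨w₁, w₂⟩ = l₁δ₂ + l₂δ₁`.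
An isotropic class thus has `l = 0`, which forces `r ∣ 2`, or `δ = 0`, which forces `δ(v) ∣ 2` and a
congruence on `d` modulo `ρ`; a spherical class orthogonal to `v` forces `δ(v) = g`. The assumption
`r ∣ 2c` says that `ρ ∣ 2`; then primitivity of `v` reduces the spherical case to `r ∣ 2`, and the
remaining cases `ρ = 1` and `ρ = 2` give the explicit series.
-/

/-- The Bayer–Macrì criterion for the vertical wall of `v` to be divisorial: the vertical-wall
lattice `H_v`, cut out by `c * λ = r * κ`, contains an isotropic class pairing to `1` or `2` with
`v`, or a spherical class orthogonal to `v`. -/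
def IsDivisorialVerticalWall (d : ℤ) (v : ℤ × ℤ × ℤ) : Prop :=
  ∃ w : ℤ × ℤ × ℤ, v.2.1 * w.1 = v.1 * w.2.1 ∧
    ((mk3 d w w = 0 ∧ (mk3 d w v = 1 ∨ mk3 d w v = 2)) ∨ (mk3 d w w = -2 ∧ mk3 d w v = 0))

/-- The explicit series (a)–(d) of Mukai vectors `(r, c, s)` whose vertical wall is divisorial. In
series (c) and (d) the equation for `s` is doubled, to avoid halving. -/
def InDivisorialSeries (d r c s : ℤ) : Prop :=
  (r = 1 ∨ r = 2) ∨
    (∃ k m : ℤ, (m = 1 ∨ m = 2) ∧ c = k * r ∧ s = d * k ^ 2 * r - m) ∨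
    (Even d ∧ ∃ a m : ℤ, 2 ≤ a ∧ Odd m ∧ r = 2 * a ∧ c = m * a ∧ 2 * s = d * m ^ 2 * a - 2) ∨
    (Odd d ∧ ∃ a m : ℤ, 3 ≤ a ∧ Odd a ∧ Odd m ∧ r = 2 * a ∧ c = m * a ∧
      2 * s = d * m ^ 2 * a - 1)

/-- The coordinate `δ` of the class `(ρ * l, γ * l, z)`, dual to `l`: in the coordinates `(l, δ)`
the Mukai pairing on a vertical-wall lattice is hyperbolic, see `mk3_eq_hyperbolic`. -/
def dualCoord (d ρ γ l z : ℤ) : ℤ :=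
  d * γ ^ 2 * l - ρ * z

theorem mul_eq_mul_iff_exists_of_isCoprime {R : Type*} [CommRing R] {a b x y : R}
    (hab : IsCoprime a b) : b * x = a * y ↔ ∃ l, x = a * l ∧ y = b * l := by
  constructor
  · intro h
    obtain ⟨u, v, huv⟩ := hab
    exact ⟨u * x + v * y, by linear_combination (-x) * huv + v * h,
      by linear_combination (-y) * huv - u * h⟩
  · rintro ⟨l, rfl, rfl⟩
    ring

theorem eq_one_or_eq_two_of_dvd_two {n : ℤ} (hn : 0 < n) (h : n ∣ 2) : n = 1 ∨ n = 2 := by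
  have : n ≤ 2 := Int.le_of_dvd two_pos h
  omega

theorem mk3_eq_hyperbolic (d ρ γ l z l' z' : ℤ) :
    mk3 d (ρ * l, γ * l, z) (ρ * l', γ * l', z') =
      l * dualCoord d ρ γ l' z' + l' * dualCoord d ρ γ l z := by
  simp only [mk3, dualCoord]
  ring

section Criterion

variable {d ρ γ g s : ℤ}

theorem isDivisorialVerticalWall_iff_exists_coord (hργ : IsCoprime ρ γ) (hg : g ≠ 0) :
    IsDivisorialVerticalWall d (ρ * g, γ * g, s) ↔
      (∃ l z, l * dualCoord d ρ γ l z = 0 ∧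
        (l * dualCoord d ρ γ g s + g * dualCoord d ρ γ l z = 1 ∨
          l * dualCoord d ρ γ g s + g * dualCoord d ρ γ l z = 2)) ∨
      (∃ l z, l * dualCoord d ρ γ l z = -1 ∧
        l * dualCoord d ρ γ g s + g * dualCoord d ρ γ l z = 0) := by
  have mem_iff (x y : ℤ) : γ * g * x = ρ * g * y ↔ ∃ l, x = ρ * l ∧ y = γ * l := by
    rw [← mul_eq_mul_iff_exists_of_isCoprime hργ, mul_right_comm, mul_right_comm ρ,
      mul_left_inj' hg]
  have sq_eq_iff (l z n : ℤ) :
      mk3 d (ρ * l, γ * l, z) (ρ * l, γ * l, z) = 2 * n ↔ l * dualCoord d ρ γ l z = n := by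
    rw [mk3_eq_hyperbolic, ← two_mul, mul_right_inj' two_ne_zero]
  simp only [← mk3_eq_hyperbolic, ← sq_eq_iff, mul_zero, mul_neg_one, ← exists_or]
  constructor
  · rintro ⟨⟨x, y, z⟩, hw, h⟩
    obtain ⟨l, rfl, rfl⟩ := (mem_iff x y).1 hw
    exact ⟨l, z, h⟩
  · rintro ⟨l, z, h⟩
    exact ⟨(ρ * l, γ * l, z), (mem_iff _ _).2 ⟨l, rfl, rfl⟩, h⟩

theorem dvd_mul_of_dualCoord_eq_zero {l z : ℤ} (hργ : IsCoprime ρ γ)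
    (h : dualCoord d ρ γ l z = 0) : ρ ∣ l * d := by
  refine (hργ.pow_right (n := 2)).dvd_of_dvd_mul_left ⟨z, ?_⟩
  rw [dualCoord] at h
  linear_combination h

theorem exists_isotropic_coord_iff (hργ : IsCoprime ρ γ) (hr : 0 < ρ * g)
    (hδ : 0 < dualCoord d ρ γ g s) :
    (∃ l z, l * dualCoord d ρ γ l z = 0 ∧
        (l * dualCoord d ρ γ g s + g * dualCoord d ρ γ l z = 1 ∨
          l * dualCoord d ρ γ g s + g * dualCoord d ρ γ l z = 2)) ↔
      (ρ * g = 1 ∨ ρ * g = 2) ∨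
        (ρ ∣ 2 * d ∧ dualCoord d ρ γ g s = 1) ∨ (ρ ∣ d ∧ dualCoord d ρ γ g s = 2) := by
  constructor
  · rintro ⟨l, z, hsq, hpair⟩
    have pair_dvd_two : l * dualCoord d ρ γ g s + g * dualCoord d ρ γ l z ∣ 2 := by
      rcases hpair with h | h <;> simp [h]
    rcases mul_eq_zero.1 hsq with rfl | hl
    · refine Or.inl (eq_one_or_eq_two_of_dvd_two hr (dvd_trans ⟨-z, ?_⟩ pair_dvd_two))
      rw [dualCoord, dualCoord]
      ring
    · have hρ : ρ ∣ l * d := dvd_mul_of_dualCoord_eq_zero hργ hl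
      simp only [hl, mul_zero, add_zero] at hpair pair_dvd_two
      right
      rcases eq_one_or_eq_two_of_dvd_two hδ (dvd_of_mul_left_dvd pair_dvd_two) with hN | hN
      · exact Or.inl ⟨hρ.trans (mul_dvd_mul_right (dvd_of_mul_right_dvd pair_dvd_two) d), hN⟩
      · obtain rfl : l = 1 := by
          rw [hN] at hpair
          omega
        exact Or.inr ⟨by simpa using hρ, hN⟩
  · rintro (h | ⟨⟨e, he⟩, hN⟩ | ⟨⟨e, rfl⟩, hN⟩)
    · refine ⟨0, -1, zero_mul _, ?_⟩
      simpa [dualCoord, mul_comm g] using h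
    · have hl : dualCoord d ρ γ 2 (e * γ ^ 2) = 0 := by
        rw [dualCoord]
        linear_combination γ ^ 2 * he
      exact ⟨2, e * γ ^ 2, by simp [hl], by simp [hl, hN]⟩
    · have hl : dualCoord (ρ * e) ρ γ 1 (e * γ ^ 2) = 0 := by
        rw [dualCoord]
        ring
      exact ⟨1, e * γ ^ 2, by simp [hl], by simp [hl, hN]⟩

theorem exists_spherical_coord_iff :
    (∃ l z, l * dualCoord d ρ γ l z = -1 ∧
        l * dualCoord d ρ γ g s + g * dualCoord d ρ γ l z = 0) ↔
      ρ ∣ d * γ ^ 2 + 1 ∧ dualCoord d ρ γ g s = g := by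
  constructor
  · rintro ⟨l, z, hsq, hpair⟩
    rcases Int.mul_eq_neg_one_iff_eq_one_or_neg_one.1 hsq with ⟨rfl, hl⟩ | ⟨rfl, hl⟩
    all_goals
      rw [hl] at hpair
      rw [dualCoord] at hl
    · exact ⟨⟨z, by linear_combination hl⟩, by linear_combination hpair⟩
    · exact ⟨⟨-z, by linear_combination -hl⟩, by linear_combination -hpair⟩
  · rintro ⟨⟨e, he⟩, hN⟩
    have hl : dualCoord d ρ γ 1 e = -1 := by
      rw [dualCoord]
      linear_combination he
    exact ⟨1, e, by simp [hl], by simp [hl, hN]⟩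

theorem isDivisorialVerticalWall_iff_dualCoord (hργ : IsCoprime ρ γ) (hr : 0 < ρ * g)
    (hδ : 0 < dualCoord d ρ γ g s) :
    IsDivisorialVerticalWall d (ρ * g, γ * g, s) ↔
      ((ρ * g = 1 ∨ ρ * g = 2) ∨
        (ρ ∣ 2 * d ∧ dualCoord d ρ γ g s = 1) ∨ (ρ ∣ d ∧ dualCoord d ρ γ g s = 2)) ∨
      (ρ ∣ d * γ ^ 2 + 1 ∧ dualCoord d ρ γ g s = g) := by
  rw [isDivisorialVerticalWall_iff_exists_coord hργ (right_ne_zero_of_mul hr.ne'),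
    exists_isotropic_coord_iff hργ hr hδ, exists_spherical_coord_iff]

theorem isUnit_of_dualCoord_eq_self (hgs : IsCoprime g s) (hρ0 : ρ ≠ 0) (hρ : ρ ∣ 2)
    (hd : ρ ∣ d * γ ^ 2 + 1) (hδ : dualCoord d ρ γ g s = g) : IsUnit g := by
  have hρ' : ρ ∣ d * γ ^ 2 - 1 := by
    rw [show d * γ ^ 2 - 1 = d * γ ^ 2 + 1 - 2 by ring]
    exact dvd_sub hd hρ
  obtain ⟨e, he⟩ := hρ'
  have hs : s = g * e := by
    rw [dualCoord] at hδ
    refine mul_left_cancel₀ hρ0 ?_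
    linear_combination g * he - hδ
  exact hgs.isUnit_of_dvd' dvd_rfl ⟨e, hs⟩

theorem isDivisorialVerticalWall_iff_of_dvd_two (hργ : IsCoprime ρ γ) (hgs : IsCoprime g s)
    (hρ : 0 < ρ) (hg : 0 < g) (hρ2 : ρ ∣ 2) (hδ : 0 < dualCoord d ρ γ g s) :
    IsDivisorialVerticalWall d (ρ * g, γ * g, s) ↔
      (ρ * g = 1 ∨ ρ * g = 2) ∨
        dualCoord d ρ γ g s = 1 ∨ (ρ ∣ d ∧ dualCoord d ρ γ g s = 2) := by
  have spherical_imp (h : ρ ∣ d * γ ^ 2 + 1 ∧ dualCoord d ρ γ g s = g) :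
      ρ * g = 1 ∨ ρ * g = 2 := by
    obtain rfl : g = 1 :=
      Int.eq_one_of_dvd_one hg.le (isUnit_of_dualCoord_eq_self hgs hρ.ne' hρ2 h.1 h.2).dvd
    simpa using eq_one_or_eq_two_of_dvd_two hρ hρ2
  have hρd : ρ ∣ 2 * d := hρ2.mul_right d
  rw [isDivisorialVerticalWall_iff_dualCoord hργ (mul_pos hρ hg) hδ]
  tauto

end Criterion

section Series

variable {d γ g s : ℤ}

theorem inDivisorialSeries_mul_self_iff (hg : g ≠ 0) :
    InDivisorialSeries d g (γ * g) s ↔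
      (g = 1 ∨ g = 2) ∨ dualCoord d 1 γ g s = 1 ∨ dualCoord d 1 γ g s = 2 := by
  simp only [InDivisorialSeries, dualCoord, one_mul]
  refine or_congr_right ⟨?_, fun h ↦ Or.inl ⟨γ, _, h, rfl, by ring⟩⟩
  have not_odd {a m : ℤ} (hr : g = 2 * a) (hc : γ * g = m * a) : ¬ Odd m := by
    have ha : a ≠ 0 := by omega
    have hm : m = 2 * γ := mul_right_cancel₀ ha (by linear_combination γ * hr - hc)
    simp [hm]
  rintro (⟨k, m, hm, hc, hs⟩ | ⟨-, a, m, -, hm, hr, hc, -⟩ | ⟨-, a, m, -, -, hm, hr, hc, -⟩)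
  · obtain rfl : γ = k := mul_right_cancel₀ hg hc
    rwa [hs, sub_sub_cancel]
  · exact absurd hm (not_odd hr hc)
  · exact absurd hm (not_odd hr hc)

theorem inDivisorialSeries_two_mul_iff (hg : 0 < g) (hγ : Odd γ) :
    InDivisorialSeries d (2 * g) (γ * g) s ↔
      g = 1 ∨ dualCoord d 2 γ g s = 1 ∨ (Even d ∧ dualCoord d 2 γ g s = 2) := by
  simp only [InDivisorialSeries, dualCoord]
  constructor
  · rintro (hr | ⟨k, m, -, hc, -⟩ | ⟨hd, a, m, -, -, hr, hc, hs⟩ | ⟨-, a, m, -, -, -, hr, hc, hs⟩)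
    · exact Or.inl (by omega)
    · have hk : γ = 2 * k := mul_right_cancel₀ hg.ne' (by linear_combination hc)
      exact absurd hγ (by simp [hk])
    all_goals
      obtain rfl : g = a := by omega
      obtain rfl : γ = m := mul_right_cancel₀ hg.ne' hc
    · exact Or.inr (Or.inr ⟨hd, by linear_combination -hs⟩)
    · exact Or.inr (Or.inl (by linear_combination -hs))
  · intro h
    by_cases hg1 : g = 1
    · exact Or.inl (Or.inr (by rw [hg1, mul_one]))
    rcases h.resolve_left hg1 with hN | ⟨hd, hN⟩
    · have hodd : Odd (d * γ ^ 2 * g) := ⟨s, by linear_combination hN⟩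
      obtain ⟨hdγ, hgodd⟩ := Int.odd_mul.1 hodd
      have hg3 : 3 ≤ g := by
        obtain ⟨j, hj⟩ := hgodd
        omega
      exact Or.inr <| Or.inr <| Or.inr
        ⟨(Int.odd_mul.1 hdγ).1, g, γ, hg3, hgodd, hγ, rfl, rfl, by linear_combination -hN⟩
    · exact Or.inr <| Or.inr <| Or.inl
        ⟨hd, g, γ, by omega, hγ, rfl, rfl, by linear_combination -hN⟩

end Series

theorem exists_isCoprime_eq_mul {r : ℤ} (hr : 0 < r) (c : ℤ) :
    ∃ ρ γ g : ℤ, IsCoprime ρ γ ∧ 0 < ρ ∧ 0 < g ∧ r = ρ * g ∧ c = γ * g := by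
  obtain ⟨g, ρ, γ, hg, hργ, hrg, hcg⟩ := Int.exists_gcd_one' (Int.gcd_pos_of_ne_zero_left c hr.ne')
  have hg' : (0 : ℤ) < g := by exact_mod_cast hg
  exact ⟨ρ, γ, g, Int.isCoprime_iff_gcd_eq_one.2 hργ, pos_of_mul_pos_left (hrg ▸ hr) hg'.le, hg',
    hrg, hcg⟩

theorem vertical_wall_divisorial_classification_general {d r c s : ℤ} (hr : 1 ≤ r)
    (hgcd : Int.gcd (Int.gcd r c : ℤ) s = 1) (hv2 : 2 ≤ mk3 d (r, c, s) (r, c, s))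
    (hr2c : r ∣ 2 * c) :
    IsDivisorialVerticalWall d (r, c, s) ↔ InDivisorialSeries d r c s := by
  obtain ⟨ρ, γ, g, hργ, hρ, hg, rfl, rfl⟩ := exists_isCoprime_eq_mul hr c
  have hgs : IsCoprime g s := (Int.isCoprime_iff_gcd_eq_one.2 hgcd).of_isCoprime_of_dvd_left
    (Int.dvd_coe_gcd (dvd_mul_left g ρ) (dvd_mul_left g γ))
  have hδ : 0 < dualCoord d ρ γ g s := by
    rw [mk3_eq_hyperbolic, ← two_mul] at hv2
    exact pos_of_mul_pos_right (by linarith : 0 < g * dualCoord d ρ γ g s) hg.le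
  have hρ2 : ρ ∣ 2 := by
    rw [← mul_assoc] at hr2c
    exact hργ.dvd_of_dvd_mul_right (Int.dvd_of_mul_dvd_mul_right hg.ne' hr2c)
  rw [isDivisorialVerticalWall_iff_of_dvd_two hργ hgs hρ hg hρ2 hδ]
  rcases eq_one_or_eq_two_of_dvd_two hρ hρ2 with rfl | rfl
  · simpa using (inDivisorialSeries_mul_self_iff hg.ne').symm
  · have hγ : Odd γ := Int.isCoprime_two_left.1 hργ
    have two_mul_iff : 2 * g = 1 ∨ 2 * g = 2 ↔ g = 1 := by omega
    rw [inDivisorialSeries_two_mul_iff hg hγ, two_mul_iff, even_iff_two_dvd]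

/-- Classification of divisorial vertical walls (Picard rank one): under condition (∗),
the vertical-wall lattice `H_v` contains an isotropic class pairing to `1` or `2` with
`v`, or a spherical class orthogonal to `v`, if and only if `v` belongs to one of the
explicit series (a)–(d). -/
theorem vertical_wall_divisorial_classification
    (d : ℤ) (hd : 1 ≤ d) (r c s : ℤ) (hr : 1 ≤ r)
    (hgcd : Int.gcd (Int.gcd r c : ℤ) s = 1)
    (hv2 : 2 ≤ mk3 d (r, c, s) (r, c, s))
    (hr2c : r ∣ 2 * c)
    (hrs : Int.gcd r s = 1 ∨ Int.gcd r s = 2) :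
    (∃ w : ℤ × ℤ × ℤ, c * w.1 = r * w.2.1 ∧
      ((mk3 d w w = 0 ∧ (mk3 d w (r, c, s) = 1 ∨ mk3 d w (r, c, s) = 2)) ∨
        (mk3 d w w = -2 ∧ mk3 d w (r, c, s) = 0)))
    ↔
    ((r = 1 ∨ r = 2) ∨
      (∃ k m : ℤ, (m = 1 ∨ m = 2) ∧ c = k * r ∧ s = d * k ^ 2 * r - m) ∨
      (Even d ∧ ∃ a m : ℤ, 2 ≤ a ∧ Odd m ∧ r = 2 * a ∧ c = m * a ∧
        2 * s = d * m ^ 2 * a - 2) ∨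
      (Odd d ∧ ∃ a m : ℤ, 3 ≤ a ∧ Odd a ∧ Odd m ∧ r = 2 * a ∧ c = m * a ∧
        2 * s = d * m ^ 2 * a - 1)) :=
  vertical_wall_divisorial_classification_general hr hgcd hv2 hr2c
end

section
/- Fix an integer d ≥ 1 and equip ℤ³ with the Mukai pairing ⟨(r₁,c₁,s₁),(r₂,c₂,s₂)⟩ = 2d·c₁c₂ − r₁s₂ − r₂s₁. Let r ≥ 1, k, s be integers with gcd(r,s) = 1, set v = (r, kr, s), and assume v² = 2dk²r² − 2rs ≥ 2. Then there exists w ∈ ℤ³ of the form w = (λ, λk, μ) with either (w² = 0 and ⟨w,v⟩ ∈ {1,2}) or (w² = −2 and ⟨w,v⟩ = 0) if and only if r ∈ {1,2} or s = dk²r − m for some m ∈ {1,2}. -/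
/-!
In the coordinates `x = λ`, `y = dk²λ − μ` the lattice of vectors `(λ, λk, μ)` is the hyperbolic
plane: `w² = 2xy`, and `⟨w, v⟩ = bx + ay` where `v = (r, kr, s)` has coordinates `a = r`,
`b = dk²r − s`. An isotropic `w` lies on one of the two axes, so `⟨w, v⟩` is a multiple of `a` or
of `b`; a spherical `w` is `±(1, −1)`, and it is orthogonal to `v` exactly when `a = b`. The last
case makes `r` a divisor of `s`, so under coprimality it only occurs for `r = 1`.
-/

theorem exists_mul_eq_zero_and_mul_add_mul_eq_iff {R : Type*} [CommSemiring R] [NoZeroDivisors R]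
    (a b n : R) :
    (∃ x y : R, x * y = 0 ∧ b * x + a * y = n) ↔ a ∣ n ∨ b ∣ n := by
  constructor
  · rintro ⟨x, y, hxy, rfl⟩
    rcases mul_eq_zero.mp hxy with rfl | rfl <;> simp
  · rintro (⟨y, rfl⟩ | ⟨x, rfl⟩)
    · exact ⟨0, y, by simp⟩
    · exact ⟨x, 0, by simp⟩

theorem exists_mul_eq_neg_one_and_mul_add_mul_eq_zero_iff (a b : ℤ) :
    (∃ x y : ℤ, x * y = -1 ∧ b * x + a * y = 0) ↔ a = b := by
  constructor
  · rintro ⟨x, y, hxy, h⟩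
    rcases Int.eq_one_or_neg_one_of_mul_eq_neg_one' hxy with ⟨rfl, rfl⟩ | ⟨rfl, rfl⟩ <;> linarith
  · rintro rfl
    exact ⟨1, -1, by ring, by ring⟩

theorem mk3_vertical (d k lam mu r s : ℤ) :
    mk3 d (lam, lam * k, mu) (r, k * r, s) =
      (d * k ^ 2 * r - s) * lam + r * (d * k ^ 2 * lam - mu) := by
  simp only [mk3]
  ring

theorem mk3_vertical_self (d k lam mu : ℤ) :
    mk3 d (lam, lam * k, mu) (lam, lam * k, mu) = 2 * (lam * (d * k ^ 2 * lam - mu)) := by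
  simp only [mk3]
  ring

theorem exists_mk3_vertical_iff (d r k s : ℤ) (P : ℤ → ℤ → Prop) :
    (∃ lam mu : ℤ, P (mk3 d (lam, lam * k, mu) (lam, lam * k, mu))
      (mk3 d (lam, lam * k, mu) (r, k * r, s))) ↔
    ∃ x y : ℤ, P (2 * (x * y)) ((d * k ^ 2 * r - s) * x + r * y) := by
  simp only [mk3_vertical, mk3_vertical_self]
  refine Iff.symm (exists_congr fun lam ↦ ?_)
  exact (Equiv.subLeft (d * k ^ 2 * lam)).surjective.exists

theorem exists_isotropic_mk3_eq_iff (d r k s n : ℤ) :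
    (∃ lam mu : ℤ, mk3 d (lam, lam * k, mu) (lam, lam * k, mu) = 0 ∧
      mk3 d (lam, lam * k, mu) (r, k * r, s) = n) ↔ r ∣ n ∨ d * k ^ 2 * r - s ∣ n := by
  have two_mul_eq_zero_iff (z : ℤ) : 2 * z = 0 ↔ z = 0 := by lia
  rw [exists_mk3_vertical_iff d r k s (fun ww wv ↦ ww = 0 ∧ wv = n)]
  simp only [two_mul_eq_zero_iff, exists_mul_eq_zero_and_mul_add_mul_eq_iff]

theorem exists_spherical_mk3_eq_zero_iff (d r k s : ℤ) :
    (∃ lam mu : ℤ, mk3 d (lam, lam * k, mu) (lam, lam * k, mu) = -2 ∧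
      mk3 d (lam, lam * k, mu) (r, k * r, s) = 0) ↔ r = d * k ^ 2 * r - s := by
  have two_mul_eq_neg_two_iff (z : ℤ) : 2 * z = -2 ↔ z = -1 := by lia
  rw [exists_mk3_vertical_iff d r k s (fun ww wv ↦ ww = -2 ∧ wv = 0)]
  simp only [two_mul_eq_neg_two_iff, exists_mul_eq_neg_one_and_mul_add_mul_eq_zero_iff]

theorem vertical_wall_divisorial_r_divides_c_general (d r k s : ℤ) :
    (∃ lam mu : ℤ,
      ((mk3 d (lam, lam * k, mu) (lam, lam * k, mu) = 0 ∧
          (mk3 d (lam, lam * k, mu) (r, k * r, s) = 1 ∨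
            mk3 d (lam, lam * k, mu) (r, k * r, s) = 2)) ∨
        (mk3 d (lam, lam * k, mu) (lam, lam * k, mu) = -2 ∧
          mk3 d (lam, lam * k, mu) (r, k * r, s) = 0)))
    ↔
    (r ∣ 2 ∨ d * k ^ 2 * r - s ∣ 2 ∨ r = d * k ^ 2 * r - s) := by
  have dvd_two_of_dvd_one (a : ℤ) (h : a ∣ 1) : a ∣ 2 := h.trans (one_dvd 2)
  simp only [and_or_left, exists_or, exists_isotropic_mk3_eq_iff,
    exists_spherical_mk3_eq_zero_iff]
  grind

theorem dvd_two_iff_of_pos {a : ℤ} (ha : 0 < a) : a ∣ 2 ↔ a = 1 ∨ a = 2 := by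
  lift a to ℕ using ha.le
  exact_mod_cast Nat.dvd_prime Nat.prime_two

theorem eq_one_of_isCoprime_of_eq_mul_sub {r s q : ℤ} (hr : 0 ≤ r) (hrs : IsCoprime r s)
    (h : r = q * r - s) : r = 1 := by
  have r_dvd_s : r ∣ s := ⟨q - 1, by linarith⟩
  exact Int.eq_one_of_dvd_one hr (hrs.isUnit_of_dvd' dvd_rfl r_dvd_s).dvd

theorem dvd_two_or_eq_iff_of_isCoprime {r s q : ℤ} (hr : 0 < r) (hpos : 0 < q * r - s)
    (hrs : IsCoprime r s) :
    (r ∣ 2 ∨ q * r - s ∣ 2 ∨ r = q * r - s) ↔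
      (r = 1 ∨ r = 2 ∨ ∃ m : ℤ, (m = 1 ∨ m = 2) ∧ s = q * r - m) := by
  have r_eq_one : r = q * r - s → r = 1 := eq_one_of_isCoprime_of_eq_mul_sub hr.le hrs
  rw [dvd_two_iff_of_pos hr, dvd_two_iff_of_pos hpos]
  grind

theorem mul_sub_pos_of_mk3_self_pos {d r k s : ℤ} (hr : 0 < r)
    (hv : 0 < mk3 d (r, k * r, s) (r, k * r, s)) : 0 < d * k ^ 2 * r - s := by
  rw [mul_comm k r, mk3_vertical_self] at hv
  exact pos_of_mul_pos_right (pos_of_mul_pos_right hv two_pos.le) hr.le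

/-- Step 2 (the case `r ∣ c`) in the classification of divisorial vertical walls: for
`v = (r, kr, s)`, there exists `w = (λ, λk, μ)` which is isotropic pairing to `1` or `2`
with `v`, or spherical and orthogonal to `v`, if and only if `r ∈ {1,2}` or
`s = dk²r − m` with `m ∈ {1,2}`. -/
theorem vertical_wall_divisorial_r_divides_c
    (d : ℤ) (hd : 1 ≤ d) (r k s : ℤ) (hr : 1 ≤ r)
    (hgcd : Int.gcd r s = 1)
    (hv2 : 2 ≤ mk3 d (r, k * r, s) (r, k * r, s)) :
    (∃ lam mu : ℤ,
      ((mk3 d (lam, lam * k, mu) (lam, lam * k, mu) = 0 ∧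
          (mk3 d (lam, lam * k, mu) (r, k * r, s) = 1 ∨
            mk3 d (lam, lam * k, mu) (r, k * r, s) = 2)) ∨
        (mk3 d (lam, lam * k, mu) (lam, lam * k, mu) = -2 ∧
          mk3 d (lam, lam * k, mu) (r, k * r, s) = 0)))
    ↔
    (r = 1 ∨ r = 2 ∨ ∃ m : ℤ, (m = 1 ∨ m = 2) ∧ s = d * k ^ 2 * r - m) := by
  rw [vertical_wall_divisorial_r_divides_c_general]
  exact dvd_two_or_eq_iff_of_isCoprime hr (mul_sub_pos_of_mk3_self_pos hr (two_pos.trans_le hv2))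
    (Int.isCoprime_iff_gcd_eq_one.mpr hgcd)
end

section
/- Fix an integer d ≥ 1 and equip ℤ³ with the Mukai pairing ⟨(r₁,c₁,s₁),(r₂,c₂,s₂)⟩ = 2d·c₁c₂ − r₁s₂ − r₂s₁. Let r ≥ 1, c, s be integers with gcd(r,c,s) = 1, set v = (r,c,s), and assume v² = 2dc² − 2rs ≥ 2, r | 2c and gcd(r,s) ∈ {1,2}. Then at least one of the following holds: (divisorial case) there exists w ∈ H_v with either (w² = 0 and ⟨w,v⟩ ∈ {1,2}) or (w² = −2 and ⟨w,v⟩ = 0); or (flopping case) there exist a₁, a₂ ∈ H_v with v = a₁ + a₂, a₁² ≥ 0, a₂² ≥ 0, ⟨a₁,v⟩ > 0 and ⟨a₂,v⟩ > 0. -/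
/-- Membership in the vertical-wall lattice `H_v = {(λ,κ,μ) : cλ = rκ}` for
`v = (r,c,s)`. -/
def memHv (r c : ℤ) (w : ℤ × ℤ × ℤ) : Prop :=
  c * w.1 = r * w.2.1

/-!
Write `v = (r, c, s)`. The class `(0, 0, -1)` of `H_v` is isotropic and pairs to `r` with `v`, so it
makes the wall divisorial when `r ≤ 2`, and `v = (0, 0, -1) + (r, c, s + 1)` makes it flopping when
`2r ≤ v²`. Since `r ∣ 2c` forces `r ∣ v²`, the only remaining case is `v² = r ≥ 3`. There
`v = (2m, mk, s)` with `m = r / 2` and `d k²` odd, and the class `a = (2, k, (d k² - 1) / 2)` of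
`H_v` has `a² = 2` and `⟨a, v⟩ = m + 1`, so that `(v - a)² = 0` and `⟨v - a, v⟩ = m - 1 > 0`.
-/

/-- The Bayer–Macrì numerical condition for the vertical wall of `v` to be divisorial: `H_v`
contains an isotropic class pairing to `1` or `2` with `v`, or a class of square `-2` orthogonal
to `v`. -/
def IsDivisorialWall (d : ℤ) (v : ℤ × ℤ × ℤ) : Prop :=
  ∃ w : ℤ × ℤ × ℤ, memHv v.1 v.2.1 w ∧
    ((mk3 d w w = 0 ∧ (mk3 d w v = 1 ∨ mk3 d w v = 2)) ∨ (mk3 d w w = -2 ∧ mk3 d w v = 0))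

/-- The Bayer–Macrì numerical condition for the vertical wall of `v` to be flopping: `v` is a sum of
two classes of `H_v` that have nonnegative square and pair positively with `v`. -/
def IsFloppingWall (d : ℤ) (v : ℤ × ℤ × ℤ) : Prop :=
  ∃ a₁ a₂ : ℤ × ℤ × ℤ, memHv v.1 v.2.1 a₁ ∧ memHv v.1 v.2.1 a₂ ∧ v = a₁ + a₂ ∧
    0 ≤ mk3 d a₁ a₁ ∧ 0 ≤ mk3 d a₂ a₂ ∧ 0 < mk3 d a₁ v ∧ 0 < mk3 d a₂ v

section Pairing

variable (d : ℤ) (u v w : ℤ × ℤ × ℤ)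

theorem mk3_sub_left : mk3 d (u - v) w = mk3 d u w - mk3 d v w := by
  simp only [mk3, Prod.fst_sub, Prod.snd_sub]
  ring

theorem mk3_sub_self : mk3 d (v - w) (v - w) = mk3 d v v - 2 * mk3 d w v + mk3 d w w := by
  simp only [mk3, Prod.fst_sub, Prod.snd_sub]
  ring

theorem mk3_zero_zero_neg_one_left : mk3 d (0, 0, -1) v = v.1 := by
  simp [mk3]

end Pairing

theorem memHv_self_sub {v w : ℤ × ℤ × ℤ} (hw : memHv v.1 v.2.1 w) :
    memHv v.1 v.2.1 (v - w) := by
  simp only [memHv, Prod.fst_sub, Prod.snd_sub] at hw ⊢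
  linear_combination -hw

theorem memHv_zero_zero (r c μ : ℤ) : memHv r c (0, 0, μ) := by
  simp [memHv]

section Wall

variable {d : ℤ} {v : ℤ × ℤ × ℤ}

theorem isFloppingWall_of_summand {a : ℤ × ℤ × ℤ} (ha : memHv v.1 v.2.1 a)
    (ha_sq : 0 ≤ mk3 d a a) (hav_pos : 0 < mk3 d a v) (hav_lt : mk3 d a v < mk3 d v v)
    (hav_le : 2 * mk3 d a v ≤ mk3 d v v + mk3 d a a) : IsFloppingWall d v := by
  refine ⟨a, v - a, ha, memHv_self_sub ha, (add_sub_cancel a v).symm, ha_sq, ?_, hav_pos, ?_⟩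
  · rw [mk3_sub_self]
    linarith
  · rw [mk3_sub_left]
    linarith

theorem isDivisorialWall_of_rank_le_two (hr : 0 < v.1) (hr_le : v.1 ≤ 2) :
    IsDivisorialWall d v := by
  refine ⟨(0, 0, -1), memHv_zero_zero _ _ _, .inl ⟨mk3_zero_zero_neg_one_left d _, ?_⟩⟩
  rw [mk3_zero_zero_neg_one_left]
  omega

theorem isFloppingWall_of_two_mul_rank_le (hr : 0 < v.1) (hv : 2 * v.1 ≤ mk3 d v v) :
    IsFloppingWall d v := by
  have point_sq : mk3 d (0, 0, -1) (0, 0, -1) = 0 := mk3_zero_zero_neg_one_left d _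
  apply isFloppingWall_of_summand (memHv_zero_zero _ _ (-1)) point_sq.ge <;>
    rw [mk3_zero_zero_neg_one_left] <;> linarith

theorem rank_dvd_mk3_self (hrc : v.1 ∣ 2 * v.2.1) : v.1 ∣ mk3 d v v := by
  have mk3_self : mk3 d v v = 2 * v.2.1 * (d * v.2.1) - v.1 * (2 * v.2.2) := by
    simp only [mk3]
    ring
  rw [mk3_self]
  exact dvd_sub (hrc.mul_right _) (dvd_mul_right _ _)

end Wall

theorem int_eq_of_dvd_of_pos_of_lt_two_mul {a b : ℤ} (hab : a ∣ b) (hb : 0 < b) (hlt : b < 2 * a) :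
    b = a := by
  lift a to ℕ using by linarith
  lift b to ℕ using hb.le
  norm_cast at *
  exact Nat.eq_of_dvd_of_lt_two_mul hb.ne' hab hlt

section RankEqSquare

variable {d r c s : ℤ}

theorem exists_eq_two_mul_of_mk3_self_eq_rank (hr : r ≠ 0) (hv : mk3 d (r, c, s) (r, c, s) = r)
    (hrc : r ∣ 2 * c) :
    ∃ m k : ℤ, r = 2 * m ∧ c = m * k ∧ m * (d * k ^ 2) = 2 * s + 1 := by
  simp only [mk3] at hv
  obtain ⟨m, rfl⟩ : 2 ∣ r := ⟨d * c ^ 2 - r * s, by linear_combination -hv⟩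
  obtain ⟨k, rfl⟩ : m ∣ c := Int.dvd_of_mul_dvd_mul_left two_ne_zero hrc
  refine ⟨m, k, rfl, rfl, mul_left_cancel₀ hr ?_⟩
  linear_combination hv

theorem isFloppingWall_of_mk3_self_eq_rank (hr : 2 < r) (hv : mk3 d (r, c, s) (r, c, s) = r)
    (hrc : r ∣ 2 * c) : IsFloppingWall d (r, c, s) := by
  obtain ⟨m, k, rfl, rfl, hmk⟩ := exists_eq_two_mul_of_mk3_self_eq_rank (by omega) hv hrc
  obtain ⟨μ, hμ⟩ : Odd (d * k ^ 2) := (Int.odd_mul.1 ⟨s, hmk⟩).2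
  have mem : memHv (2 * m) (m * k) (2, k, μ) := by
    simp only [memHv]
    ring
  have square : mk3 d (2, k, μ) (2, k, μ) = 2 := by
    simp only [mk3]
    linear_combination 2 * hμ
  have pairing : mk3 d (2, k, μ) (2 * m, m * k, s) = m + 1 := by
    simp only [mk3]
    linear_combination m * hμ + hmk
  apply isFloppingWall_of_summand mem <;> simp only [square, pairing, hv] <;> linarith

end RankEqSquare

theorem vertical_wall_divisorial_or_flopping_general {d r c s : ℤ} (hr : 0 < r)
    (hv : 0 < mk3 d (r, c, s) (r, c, s)) (hrc : r ∣ 2 * c) :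
    IsDivisorialWall d (r, c, s) ∨ IsFloppingWall d (r, c, s) := by
  rcases le_or_gt r 2 with hr_le | hr_gt
  · exact .inl (isDivisorialWall_of_rank_le_two hr hr_le)
  right
  rcases le_or_gt (2 * r) (mk3 d (r, c, s) (r, c, s)) with hv_ge | hv_lt
  · exact isFloppingWall_of_two_mul_rank_le hr hv_ge
  · have hv_eq : mk3 d (r, c, s) (r, c, s) = r :=
      int_eq_of_dvd_of_pos_of_lt_two_mul (rank_dvd_mk3_self hrc) hv hv_lt
    exact isFloppingWall_of_mk3_self_eq_rank hr_gt hv_eq hrc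

/-- The vertical wall is either divisorial or flopping: under condition (∗), either
`H_v` contains an isotropic class pairing to `1` or `2` with `v` or a spherical class
orthogonal to `v` (divisorial case), or `v` decomposes as `v = a₁ + a₂` in `H_v` with
`aᵢ² ≥ 0` and `⟨aᵢ,v⟩ > 0` (flopping case). -/
theorem vertical_wall_divisorial_or_flopping
    (d : ℤ) (hd : 1 ≤ d) (r c s : ℤ) (hr : 1 ≤ r)
    (hgcd : Int.gcd (Int.gcd r c : ℤ) s = 1)
    (hv2 : 2 ≤ mk3 d (r, c, s) (r, c, s))
    (hr2c : r ∣ 2 * c)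
    (hrs : Int.gcd r s = 1 ∨ Int.gcd r s = 2) :
    (∃ w : ℤ × ℤ × ℤ, memHv r c w ∧
      ((mk3 d w w = 0 ∧ (mk3 d w (r, c, s) = 1 ∨ mk3 d w (r, c, s) = 2)) ∨
        (mk3 d w w = -2 ∧ mk3 d w (r, c, s) = 0))) ∨
    (∃ a₁ a₂ : ℤ × ℤ × ℤ, memHv r c a₁ ∧ memHv r c a₂ ∧
      (r, c, s) = a₁ + a₂ ∧
      0 ≤ mk3 d a₁ a₁ ∧ 0 ≤ mk3 d a₂ a₂ ∧
      0 < mk3 d a₁ (r, c, s) ∧ 0 < mk3 d a₂ (r, c, s)) :=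
  vertical_wall_divisorial_or_flopping_general hr (by linarith) hr2c
end

section
/- Fix an integer d ≥ 1 and equip ℤ³ with the Mukai pairing ⟨(r₁,c₁,s₁),(r₂,c₂,s₂)⟩ = 2d·c₁c₂ − r₁s₂ − r₂s₁. Let r ≥ 1, c, s be integers with r | 2c and r ∤ c, and set v = (r,c,s). Then there is no w ∈ H_v with w² = 0 and ⟨w,v⟩ = 1. -/
/-!
The integers `x` with `r ∣ c * x` form an ideal. It contains `2` but not `1`, so by maximality of
`(2)` it is `(2)`. It also contains `r` and the rank of every class in `H_v`. Hence all these ranks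
are even, and the pairing of two classes of even rank is even.
-/

theorem dvd_of_dvd_mul_of_isCoprime {R : Type*} [CommSemiring R] {r c x y : R}
    (hxy : IsCoprime x y) (hx : r ∣ c * x) (hy : r ∣ c * y) : r ∣ c := by
  obtain ⟨a, b, hab⟩ := hxy
  have hc : a * (c * x) + b * (c * y) = c := by
    calc a * (c * x) + b * (c * y) = c * (a * x + b * y) := by ring
      _ = c := by rw [hab, mul_one]
  exact hc ▸ dvd_add (hx.mul_left a) (hy.mul_left b)

theorem dvd_of_irreducible_of_dvd_mul {R : Type*} [CommRing R] [IsBezout R] {p r c x : R}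
    (hp : Irreducible p) (hrc : ¬ r ∣ c) (hrp : r ∣ c * p) (hrx : r ∣ c * x) : p ∣ x := by
  by_contra hpx
  exact hrc (dvd_of_dvd_mul_of_isCoprime (hp.coprime_iff_not_dvd.2 hpx) hrp hrx)

theorem even_of_dvd_two_mul_of_dvd_mul {r c x : ℤ} (hr2c : r ∣ 2 * c) (hrc : ¬ r ∣ c)
    (hrx : r ∣ c * x) : Even x :=
  even_iff_two_dvd.2 <|
    dvd_of_irreducible_of_dvd_mul Int.prime_two.irreducible hrc (mul_comm 2 c ▸ hr2c) hrx

theorem even_mk3 (d : ℤ) {v w : ℤ × ℤ × ℤ} (hv : Even v.1) (hw : Even w.1) :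
    Even (mk3 d v w) := by
  have h_middle : Even (2 * d * v.2.1 * w.2.1) :=
    ((even_two_mul d).mul_right _).mul_right _
  exact (h_middle.sub (hv.mul_right _)).sub (hw.mul_right _)

theorem no_isotropic_class_pairing_one_general (d : ℤ) {v w : ℤ × ℤ × ℤ}
    (hv_two : v.1 ∣ 2 * v.2.1) (hv : ¬ v.1 ∣ v.2.1) (hw : v.1 ∣ v.2.1 * w.1) :
    Even (mk3 d w v) := by
  have hw_even : Even w.1 := even_of_dvd_two_mul_of_dvd_mul hv_two hv hw
  have hv_even : Even v.1 := even_of_dvd_two_mul_of_dvd_mul hv_two hv (dvd_mul_left _ _)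
  exact even_mk3 d hw_even hv_even

/-- If `r ∣ 2c` but `r ∤ c`, then the vertical-wall lattice `H_v` of `v = (r,c,s)`
contains no isotropic class pairing to `1` with `v`. -/
theorem no_isotropic_class_pairing_one
    (d : ℤ) (hd : 1 ≤ d) (r c s : ℤ) (hr : 1 ≤ r)
    (hr2c : r ∣ 2 * c) (hrc : ¬ r ∣ c) :
    ¬ ∃ w : ℤ × ℤ × ℤ, c * w.1 = r * w.2.1 ∧
        mk3 d w w = 0 ∧ mk3 d w (r, c, s) = 1 := by
  rintro ⟨w, hw, -, hwv⟩
  exact Int.not_even_one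
    (hwv ▸ no_isotropic_class_pairing_one_general d hr2c hrc (Dvd.intro _ hw.symm))
end
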